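/- Let h* : [0,1]^K → ℝ be square-integrable with mean τ, main effects α_k, and residual r (functional ANOVA decomposition), and let (Z_1, ..., Z_N) be a Latin hypercube sample of size N from the uniform distribution on [0,1]^K with estimator τ̂ = N^{-1} Σ_j h*(Z_j). Then Var(τ̂) under the Latin hypercube design equals (1/N) ∫_{[0,1]^K} r(z)² dz + o(1/N) as N → ∞. In particular, asymptotically Var_LHS(τ̂) ≤ Var_SRS(τ̂) = (1/N)(∫ r² + Σ_k ∫_0^1 α_k²) + o(1/N), with strict asymptotic improvement unless all main effects vanish. -/

import Mathlib

open MeasureTheory ProbabilityTheory Set Filter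

/-- The uniform distribution on `[0,1]`. -/
noncomputable def unif : Measure ℝ := (volume : Measure ℝ).restrict (Icc 0 1)

/-- The uniform distribution on the unit cube `[0,1]^K`. -/
noncomputable def cube (K : ℕ) : Measure (Fin K → ℝ) := Measure.pi fun _ => unif

instance (N : ℕ) : MeasurableSpace (Equiv.Perm (Fin N)) := ⊤

/-- Sample space for a Latin hypercube sample of size `N` in dimension `K`:
independent uniform permutations `P_k` and i.i.d. uniforms `U_{jk}`. -/
abbrev LHSOmega (K N : ℕ) := (Fin K → Equiv.Perm (Fin N)) × (Fin K → Fin N → ℝ)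

/-- The probability measure generating a Latin hypercube sample. -/
noncomputable def lhsMeasure (K N : ℕ) : Measure (LHSOmega K N) :=
  (Measure.pi fun _ : Fin K => (PMF.uniformOfFintype (Equiv.Perm (Fin N))).toMeasure).prod
    (Measure.pi fun _ : Fin K => Measure.pi fun _ : Fin N =>
      (volume : Measure ℝ).restrict (Icc 0 1))

/-- The `k`-th coordinate of the `j`-th row of the Latin hypercube sample:
`Z_{jk} = (P_k(j) - U_{jk})/N` (with `P_k(j) ∈ {1,…,N}` represented as `σ_k j + 1`). -/
noncomputable def lhsZ (K N : ℕ) (ω : LHSOmega K N) (j : Fin N) (k : Fin K) : ℝ :=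
  (((ω.1 k j : ℕ) + 1 : ℝ) - ω.2 k j) / N

/-!
Two distinct points of a Latin hypercube sample are distributed as two independent uniform points
conditioned on lying in different cells `((m - 1) / N, m / N]` in every coordinate. For centred `g`
of class `L²`, expand the indicator of that event to first order in the events that the two points
share their cell in coordinate `k`. The constant term integrates to `0`. By Fubini the `k`-th linear
term only sees the main effect `α_k`, and averaging `α_k` over cells of length `1 / N` costs nothing
in the `L²` limit, so it contributes `-(1 / N) ∫ α_k² + o(1 / N)`. By AM-GM each second-order term
is at most `(1 / N²) ∫ g²`. Hence `N Cov(g(Z_i), g(Z_j)) → -∑ ∫ α_k²`, and `N Var(τ̂)` tends to `∫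
g² - ∑ ∫ α_k²`, which is `∫ r²` by orthogonality of the ANOVA decomposition.
-/

/-! ### Functional ANOVA on product spaces -/

lemma integral_comp_of_measurePreserving {Y Z E : Type*} [MeasurableSpace Y] [MeasurableSpace Z]
    [NormedAddCommGroup E] [NormedSpace ℝ E] {ν : Measure Y} {ρ : Measure Z} {f : Y → Z}
    (hf : MeasurePreserving f ν ρ) {g : Z → E} (hg : AEStronglyMeasurable g ρ) :
    ∫ y, g (f y) ∂ν = ∫ z, g z ∂ρ := by
  rw [← hf.map_eq] at hg ⊢
  exact (integral_map hf.aemeasurable hg).symm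

section ProductMeasure

variable {ι : Type*} [Fintype ι] [DecidableEq ι] {X : ι → Type*} [∀ i, MeasurableSpace (X i)]
  {μ : ∀ i, Measure (X i)} [∀ i, IsProbabilityMeasure (μ i)]

lemma measurePreserving_update (k : ι) :
    MeasurePreserving (fun x : X k × (∀ i, X i) => Function.update x.2 k x.1)
      ((μ k).prod (Measure.pi μ)) (Measure.pi μ) := by
  have hmeas : Measurable fun x : X k × (∀ i, X i) => Function.update x.2 k x.1 :=
    measurable_update'.comp measurable_swap
  refine ⟨hmeas, (Measure.pi_eq fun s hs => ?_).symm⟩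
  have hpre : (fun x : X k × (∀ i, X i) => Function.update x.2 k x.1) ⁻¹' univ.pi s
      = s k ×ˢ univ.pi (Function.update s k univ) := by
    ext ⟨t, z⟩
    simp only [mem_preimage, mem_univ_pi, mem_prod, Function.forall_update_iff z fun i y => y ∈ s i,
      Function.forall_update_iff s fun i u => z i ∈ u, mem_univ, true_and]
  rw [Measure.map_apply hmeas (.univ_pi hs), hpre, Measure.prod_prod, Measure.pi_pi,
    ← Finset.mul_prod_erase _ _ (Finset.mem_univ k),
    ← Finset.mul_prod_erase _ (fun i => μ i (s i)) (Finset.mem_univ k), Function.update_self,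
    measure_univ, one_mul]
  congr 1
  exact Finset.prod_congr rfl fun i hi => by rw [Function.update_of_ne (Finset.ne_of_mem_erase hi)]

variable (μ) in
/-- The main effect of the `k`-th coordinate on `g` in the functional ANOVA decomposition: the mean
of `g` under the product measure with that coordinate held at `t` (for centred `g` this is the
usual, centred main effect). -/
noncomputable def mainEffect (g : (∀ i, X i) → ℝ) (k : ι) (t : X k) : ℝ :=
  ∫ z, g (Function.update z k t) ∂Measure.pi μ

lemma integral_eval_mul (k : ι) {f : X k → ℝ} {g : (∀ i, X i) → ℝ}
    (hfg : Integrable (fun z => f (z k) * g z) (Measure.pi μ)) :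
    ∫ z, f (z k) * g z ∂Measure.pi μ = ∫ t, f t * mainEffect μ g k t ∂μ k := by
  have hup := measurePreserving_update (μ := μ) k
  have hint := hup.integrable_comp_of_integrable hfg
  rw [← integral_comp_of_measurePreserving hup hfg.1]
  simp only [Function.comp_def, Function.update_self] at hint ⊢
  simp only [integral_prod _ hint, integral_const_mul, mainEffect]

lemma integral_mainEffect (k : ι) {g : (∀ i, X i) → ℝ} (hg : Integrable g (Measure.pi μ)) :
    ∫ t, mainEffect μ g k t ∂μ k = ∫ z, g z ∂Measure.pi μ := by
  simpa using (integral_eval_mul k (f := fun _ => 1) (by simpa using hg)).symm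

lemma sq_integral_le {Y : Type*} [MeasurableSpace Y] {ν : Measure Y} [IsProbabilityMeasure ν]
    {f : Y → ℝ} (hf : MemLp f 2 ν) : (∫ y, f y ∂ν) ^ 2 ≤ ∫ y, f y ^ 2 ∂ν := by
  have h := variance_nonneg f ν
  rw [variance_eq_sub hf] at h
  exact sub_nonneg.1 h

lemma memLp_two_integral_prod_right {Y Z : Type*} [MeasurableSpace Y] [MeasurableSpace Z]
    {ν : Measure Y} {ρ : Measure Z} [SFinite ν] [IsProbabilityMeasure ρ] {f : Y × Z → ℝ}
    (hf : MemLp f 2 (ν.prod ρ)) : MemLp (fun y => ∫ z, f (y, z) ∂ρ) 2 ν := by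
  have hmeas := hf.1.integral_prod_right'
  refine (memLp_two_iff_integrable_sq hmeas).2
    (hf.integrable_sq.integral_prod_left.mono' (hmeas.pow 2) ?_)
  filter_upwards [hf.1.prodMk_left, hf.integrable_sq.prod_right_ae] with y hy hy2
  rw [Real.norm_of_nonneg (sq_nonneg _)]
  exact sq_integral_le ((memLp_two_iff_integrable_sq hy).2 hy2)

lemma memLp_mainEffect (k : ι) {g : (∀ i, X i) → ℝ} (hg : MemLp g 2 (Measure.pi μ)) :
    MemLp (mainEffect μ g k) 2 (μ k) :=
  memLp_two_integral_prod_right (hg.comp_measurePreserving (measurePreserving_update k))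

lemma memLp_mainEffect_eval (k : ι) {g : (∀ i, X i) → ℝ} (hg : MemLp g 2 (Measure.pi μ)) :
    MemLp (fun z => mainEffect μ g k (z k)) 2 (Measure.pi μ) :=
  (memLp_mainEffect k hg).comp_measurePreserving (measurePreserving_eval μ k)

lemma covariance_self_mainEffect_eval (k : ι) {g : (∀ i, X i) → ℝ}
    (hg : MemLp g 2 (Measure.pi μ)) :
    cov[g, fun z => mainEffect μ g k (z k); Measure.pi μ] = Var[mainEffect μ g k; μ k] := by
  have hα := memLp_mainEffect k hg
  have hαg := memLp_mainEffect_eval k hg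
  rw [covariance_comm, covariance_eq_sub hαg hg, variance_eq_sub hα,
    integral_comp_eval hα.1, integral_mainEffect k (hg.integrable one_le_two), sq]
  simp only [Pi.mul_apply, integral_eval_mul k (hαg.integrable_mul hg), sq]

lemma variance_sub_sum_mainEffect {g : (∀ i, X i) → ℝ} (hg : MemLp g 2 (Measure.pi μ)) :
    Var[fun z => g z - ∑ k, mainEffect μ g k (z k); Measure.pi μ]
      = Var[g; Measure.pi μ] - ∑ k, Var[mainEffect μ g k; μ k] := by
  have hα := fun k => memLp_mainEffect_eval k hg
  have hsum := variance_sum_pi fun k => memLp_mainEffect k hg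
  rw [Finset.sum_fn] at hsum
  rw [variance_fun_sub hg (memLp_finsetSum _ fun k _ => hα k), covariance_fun_sum_right hα hg,
    hsum]
  simp only [covariance_self_mainEffect_eval _ hg]
  ring

lemma integral_sq_sub_sum_mainEffect {g : (∀ i, X i) → ℝ} (hg : MemLp g 2 (Measure.pi μ))
    (hg0 : ∫ z, g z ∂Measure.pi μ = 0) :
    ∫ z, (g z - ∑ k, mainEffect μ g k (z k)) ^ 2 ∂Measure.pi μ
      = ∫ z, g z ^ 2 ∂Measure.pi μ - ∑ k, ∫ t, mainEffect μ g k t ^ 2 ∂μ k := by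
  have hα0 (k : ι) : ∫ t, mainEffect μ g k t ∂μ k = 0 :=
    (integral_mainEffect k (hg.integrable one_le_two)).trans hg0
  have hsum : MemLp (fun z => ∑ k, mainEffect μ g k (z k)) 2 (Measure.pi μ) :=
    memLp_finsetSum _ fun k _ => memLp_mainEffect_eval k hg
  have hres0 : ∫ z, (g z - ∑ k, mainEffect μ g k (z k)) ∂Measure.pi μ = 0 := by
    rw [integral_sub (hg.integrable one_le_two) (hsum.integrable one_le_two), hg0,
      integral_finsetSum _ fun k _ => (memLp_mainEffect_eval k hg).integrable one_le_two]
    simp only [integral_comp_eval (memLp_mainEffect _ hg).1, hα0, Finset.sum_const_zero, sub_zero]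
  have hres : AEMeasurable (fun z => g z - ∑ k, mainEffect μ g k (z k)) (Measure.pi μ) :=
    (hg.sub hsum).1.aemeasurable
  rw [← variance_of_integral_eq_zero hres hres0,
    ← variance_of_integral_eq_zero hg.1.aemeasurable hg0]
  simp only [← variance_of_integral_eq_zero (memLp_mainEffect _ hg).1.aemeasurable (hα0 _)]
  exact variance_sub_sum_mainEffect hg

end ProductMeasure

/-! ### Conditioned product measures and uniform permutations -/

lemma measurePreserving_cond {Y Z : Type*} [MeasurableSpace Y] [MeasurableSpace Z] {ν : Measure Y}
    {ρ : Measure Z} {f : Y → Z} {s : Set Z} {t : Set Y} (hf : MeasurePreserving f ν ρ)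
    (hs : MeasurableSet s) (hts : t =ᵐ[ν] f ⁻¹' s) : MeasurePreserving f (ν[|t]) (ρ[|s]) := by
  rw [ProbabilityTheory.cond, ProbabilityTheory.cond, measure_congr hts,
    Measure.restrict_congr_set hts, hf.measure_preimage hs.nullMeasurableSet]
  exact (hf.restrict_preimage hs).smul_measure _

lemma cond_prod_eq {Y Z : Type*} [MeasurableSpace Y] [MeasurableSpace Z] {ν : Measure Y}
    {ρ : Measure Z} [SFinite ν] [IsProbabilityMeasure ρ] (s : Set Y) :
    (ν[|s]).prod ρ = (ν.prod ρ)[|s ×ˢ univ] := by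
  rw [ProbabilityTheory.cond, ProbabilityTheory.cond, Measure.prod_prod, measure_univ, mul_one,
    ← Measure.prod_restrict, Measure.restrict_univ, Measure.prod_smul_left]

lemma pi_cond_eq {ι : Type*} [Fintype ι] {X : ι → Type*} [∀ i, MeasurableSpace (X i)]
    {μ : ∀ i, Measure (X i)} [∀ i, IsProbabilityMeasure (μ i)] {s : ∀ i, Set (X i)}
    (hs : ∀ i, MeasurableSet (s i)) :
    Measure.pi (fun i => (μ i)[|s i]) = (Measure.pi μ)[|univ.pi s] := by
  refine Measure.pi_eq fun t _ => ?_
  simp only [cond_apply (.univ_pi hs), cond_apply (hs _), ← pi_inter_distrib, Measure.pi_pi,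
    Finset.prod_mul_distrib]
  rw [ENNReal.prod_inv_distrib]
  intro i _ j _ _
  exact .inr (measure_ne_top _ _)

lemma measurePreserving_prodProdProdComm {A B C D : Type*} [MeasurableSpace A] [MeasurableSpace B]
    [MeasurableSpace C] [MeasurableSpace D] (a : Measure A) (b : Measure B) (c : Measure C)
    (d : Measure D) [SFinite a] [SFinite b] [SFinite c] [SFinite d] :
    MeasurePreserving (fun p : (A × B) × (C × D) => ((p.1.1, p.2.1), (p.1.2, p.2.2)))
      ((a.prod b).prod (c.prod d)) ((a.prod c).prod (b.prod d)) := by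
  have hinner := (measurePreserving_prodAssoc c b d).comp
    (((Measure.measurePreserving_swap (μ := b) (ν := c)).prod (.id d)).comp
      (measurePreserving_prodAssoc b c d).symm)
  exact (measurePreserving_prodAssoc a c (b.prod d)).symm.comp
    (((MeasurePreserving.id a).prod hinner).comp (measurePreserving_prodAssoc a b (c.prod d)))

lemma measurePreserving_eval_prodMk_eval {ι Y : Type*} [Fintype ι] [MeasurableSpace Y]
    {ν : Measure Y} [IsProbabilityMeasure ν] {i j : ι} (hij : i ≠ j) :
    MeasurePreserving (fun v : ι → Y => (v i, v j)) (Measure.pi fun _ => ν) (ν.prod ν) := by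
  have hindep := (iIndepFun_pi (μ := fun _ : ι => ν) (X := fun _ y => y)
    fun _ => aemeasurable_id).indepFun hij
  refine ⟨by fun_prop, ?_⟩
  rw [hindep.map_prod_eq_prod_map_map (measurable_pi_apply i).aemeasurable
    (measurable_pi_apply j).aemeasurable, (measurePreserving_eval _ i).map_eq,
    (measurePreserving_eval _ j).map_eq]

lemma toMeasure_uniformOfFintype {A : Type*} [Fintype A] [Nonempty A] [MeasurableSpace A] :
    (PMF.uniformOfFintype A).toMeasure = uniformOn univ := by
  ext s hs
  classical
  rw [PMF.toMeasure_uniformOfFintype_apply s hs, uniformOn_univ, Measure.count_apply hs,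
    Set.encard_eq_coe_toFinset_card, Set.toFinset_card, ENat.toENNReal_coe]

lemma uniformOn_univ_prod_uniformOn_univ {A B : Type*} [Finite A] [Finite B] [MeasurableSpace A]
    [MeasurableSpace B] [MeasurableSingletonClass A] [MeasurableSingletonClass B] :
    (uniformOn (univ : Set A)).prod (uniformOn (univ : Set B)) = uniformOn univ := by
  have := Fintype.ofFinite A
  have := Fintype.ofFinite B
  refine Measure.ext_of_singleton fun x => ?_
  rw [← singleton_prod_singleton, Measure.prod_prod, singleton_prod_singleton, uniformOn_univ,
    uniformOn_univ, uniformOn_univ, Fintype.card_prod, Nat.cast_mul, Measure.count_singleton,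
    Measure.count_singleton, Measure.count_singleton, one_div, one_div, one_div,
    ENNReal.mul_inv (.inr (ENNReal.natCast_ne_top _)) (.inl (ENNReal.natCast_ne_top _))]

section Orbit

variable {G S : Type*} [Group G] [MulAction G S] [MeasurableSpace G] [DiscreteMeasurableSpace G]

lemma count_orbit_mul_count_stabilizer [MeasurableSpace S] [DiscreteMeasurableSpace S] (x : S) :
    Measure.count (MulAction.orbit G x) * Measure.count (MulAction.stabilizer G x : Set G)
      = Measure.count (univ : Set G) := by
  rw [Measure.count_apply .of_discrete, Measure.count_apply .of_discrete, Measure.count_univ,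
    ← ENat.toENNReal_mul, ← ENat.card_congr (MulAction.orbitProdStabilizerEquivGroup G x),
    ENat.card_prod]
  rfl

lemma count_smul_preimage_singleton (x : S) (a : G) :
    Measure.count ((fun g : G => g • x) ⁻¹' {a • x})
      = Measure.count (MulAction.stabilizer G x : Set G) := by
  have hcoset : (fun g : G => g • x) ⁻¹' {a • x} = (a * ·) '' MulAction.stabilizer G x := by
    ext g
    rw [image_mul_left, mem_preimage, mem_preimage, SetLike.mem_coe,
      MulAction.mem_stabilizer_iff, mul_smul, inv_smul_eq_iff, mem_singleton_iff]
  rw [hcoset, Measure.count_injective_image (mul_right_injective a)]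

lemma measurePreserving_smul_uniformOn_orbit [Finite G] [Countable S] [MeasurableSpace S]
    [MeasurableSingletonClass S] (x : S) :
    MeasurePreserving (fun g : G => g • x) (uniformOn univ) (uniformOn (MulAction.orbit G x)) := by
  refine ⟨.of_discrete, Measure.ext_of_singleton fun y => ?_⟩
  rw [Measure.map_apply .of_discrete (.singleton y), uniformOn, uniformOn, cond_apply .univ,
    cond_apply' (.singleton y), univ_inter]
  by_cases hy : y ∈ MulAction.orbit G x
  · obtain ⟨a, rfl⟩ := hy
    have hstab0 : Measure.count (MulAction.stabilizer G x : Set G) ≠ 0 :=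
      Measure.count_ne_zero ⟨1, one_mem _⟩
    have hstab : Measure.count (MulAction.stabilizer G x : Set G) ≠ ⊤ :=
      (Measure.count_apply_lt_top.2 (toFinite _)).ne
    rw [inter_singleton_of_mem (MulAction.mem_orbit x a), Measure.count_singleton, mul_one,
      count_smul_preimage_singleton, ← count_orbit_mul_count_stabilizer x,
      ENNReal.mul_inv (.inr hstab) (.inr hstab0), mul_assoc, ENNReal.inv_mul_cancel hstab0 hstab,
      mul_one]
  · have hfiber : (fun g : G => g • x) ⁻¹' {y} = ∅ :=
      eq_empty_of_forall_notMem fun g hg => hy ⟨g, hg⟩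
    rw [hfiber, inter_singleton_eq_empty.2 hy, measure_empty, measure_empty, mul_zero, mul_zero]

end Orbit

lemma measurePreserving_perm_apply {N : ℕ} (j : Fin N) :
    MeasurePreserving (fun σ : Equiv.Perm (Fin N) => σ j) (uniformOn univ) (uniformOn univ) := by
  rw [← MulAction.orbit_eq_univ (Equiv.Perm (Fin N)) j]
  exact measurePreserving_smul_uniformOn_orbit j

lemma orbit_perm_prodMk {A : Type*} {i j : A} (hij : i ≠ j) :
    MulAction.orbit (Equiv.Perm A) (i, j) = univ.offDiag := by
  ext ⟨a, b⟩
  rw [mem_offDiag]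
  constructor
  · rintro ⟨σ, hσ⟩
    obtain ⟨rfl, rfl⟩ := Prod.ext_iff.1 hσ
    simpa using hij
  · rintro ⟨-, -, hab⟩
    obtain ⟨σ, hσ⟩ := MulAction.is_two_pretransitive_iff.1
      (Equiv.Perm.isMultiplyPretransitive A 2) hij hab
    exact ⟨σ, Prod.ext hσ.1 hσ.2⟩

lemma measurePreserving_perm_apply_prodMk_apply {N : ℕ} {i j : Fin N} (hij : i ≠ j) :
    MeasurePreserving (fun σ : Equiv.Perm (Fin N) => (σ i, σ j)) (uniformOn univ)
      (((uniformOn univ).prod (uniformOn univ))[|univ.offDiag]) := by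
  have hcond : (uniformOn (univ : Set (Fin N × Fin N)))[|univ.offDiag]
      = uniformOn univ.offDiag := by
    rw [uniformOn, uniformOn, cond_cond_eq_cond_inter' .univ .of_discrete
      (Measure.count_apply_lt_top.2 finite_univ).ne, univ_inter]
  rw [uniformOn_univ_prod_uniformOn_univ, hcond, ← orbit_perm_prodMk hij]
  exact measurePreserving_smul_uniformOn_orbit (i, j)

/-! ### Latin hypercube points and cells -/

instance : IsProbabilityMeasure unif := ⟨by simp [unif]⟩

instance (K : ℕ) : IsProbabilityMeasure (cube K) := by unfold cube; infer_instance

lemma integral_unif (f : ℝ → ℝ) : ∫ t, f t ∂unif = ∫ t in (0 : ℝ)..1, f t := by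
  rw [unif, integral_Icc_eq_integral_Ioc, intervalIntegral.integral_of_le zero_le_one]

lemma ae_mem_Ico_unif : ∀ᵐ t ∂unif, t ∈ Ico (0 : ℝ) 1 := by
  rw [unif, ← Measure.restrict_congr_set Ico_ae_eq_Icc]
  exact ae_restrict_mem measurableSet_Ico

lemma ae_mem_Ioc_unif : ∀ᵐ t ∂unif, t ∈ Ioc (0 : ℝ) 1 := by
  rw [unif, ← Measure.restrict_congr_set Ioc_ae_eq_Icc]
  exact ae_restrict_mem measurableSet_Ioc

/-- The point of `[0,1]` at relative position `u`, measured from the right end, in the cell of index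
`a` among `N` cells of length `1 / N`: a coordinate of a Latin hypercube sample point. -/
noncomputable def cellPoint (N : ℕ) (p : Fin N × ℝ) : ℝ := ((p.1 : ℕ) + 1 - p.2) / N

lemma measurable_cellPoint (N : ℕ) : Measurable (cellPoint N) := by unfold cellPoint; fun_prop

section Cells

variable {N : ℕ} [NeZero N]

lemma integral_unif_eq_sum {f : ℝ → ℝ} (hf : Integrable f unif) :
    ∫ t, f t ∂unif = (N : ℝ)⁻¹ * ∑ a : Fin N, ∫ u, f (((a : ℕ) + 1 - u) / N) ∂unif := by
  have hN : (N : ℝ) ≠ 0 := Nat.cast_ne_zero.2 (NeZero.ne N)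
  have hfI : IntegrableOn f (Icc 0 1) := hf
  have hle : ∀ k ≤ N, (k : ℝ) / N ∈ Icc (0 : ℝ) 1 := fun k hk =>
    ⟨by positivity, div_le_one_of_le₀ (by exact_mod_cast hk) (by positivity)⟩
  have hadd := intervalIntegral.sum_integral_adjacent_intervals (f := f) (μ := volume)
    (a := fun k : ℕ => (k : ℝ) / N) (n := N) fun k hk =>
      (hfI.mono_set (uIcc_subset_Icc (hle k hk.le) (hle (k + 1) hk))).intervalIntegrable
  simp only [Nat.cast_zero, zero_div, div_self hN] at hadd
  rw [integral_unif, ← hadd, Finset.mul_sum, Finset.sum_range]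
  refine Finset.sum_congr rfl fun a _ => ?_
  simp only [integral_unif, sub_div _ _ (N : ℝ)]
  rw [intervalIntegral.integral_comp_sub_div _ hN, smul_eq_mul, inv_mul_cancel_left₀ hN]
  congr 1 <;> push_cast <;> ring

lemma measurePreserving_cellPoint :
    MeasurePreserving (cellPoint N) ((uniformOn univ).prod unif) unif := by
  have hm := measurable_cellPoint N
  refine ⟨hm, Measure.ext fun s hs => ?_⟩
  have : IsProbabilityMeasure (((uniformOn univ).prod unif).map (cellPoint N)) :=
    Measure.isProbabilityMeasure_map hm.aemeasurable
  have hs1 : Integrable (s.indicator (1 : ℝ → ℝ)) unif := (integrable_const 1).indicator hs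
  rw [← measureReal_eq_measureReal_iff, map_measureReal_apply hm hs,
    ← integral_indicator_one (hm hs), ← integral_indicator_one hs,
    integral_unif_eq_sum (N := N) hs1, integral_prod _ ((integrable_const 1).indicator (hm hs)),
    integral_fintype .of_finite, Finset.mul_sum]
  refine Finset.sum_congr rfl fun a _ => ?_
  rw [measureReal_def, uniformOn_univ, smul_eq_mul, Measure.count_singleton, Fintype.card_fin,
    one_div, ENNReal.toReal_inv, ENNReal.toReal_natCast]
  rfl

lemma ceil_mul_cellPoint (a : Fin N) {u : ℝ} (hu : u ∈ Ico (0 : ℝ) 1) :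
    ⌈N * cellPoint N (a, u)⌉ = (a : ℤ) + 1 := by
  obtain ⟨h0, h1⟩ := hu
  rw [cellPoint, mul_div_cancel₀ _ (NeZero.ne (N : ℝ)), Int.ceil_eq_iff]
  push_cast
  constructor <;> linarith

end Cells

/-- The pairs of points that lie in a common cell of the partition of the line into the intervals
`((m - 1) / N, m / N]`. -/
def sameCell (N : ℕ) : Set (ℝ × ℝ) := {p | ⌈N * p.1⌉ = ⌈N * p.2⌉}

lemma measurableSet_sameCell (N : ℕ) : MeasurableSet (sameCell N) :=
  measurableSet_eq_fun (by fun_prop) (by fun_prop)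

lemma swap_preimage_sameCell (N : ℕ) : Prod.swap ⁻¹' sameCell N = sameCell N :=
  Set.ext fun _ => eq_comm

/-- The pairs of points of `ℝ^K` that lie in a common cell in the `k`-th coordinate. -/
def sharedCell {K : ℕ} (N : ℕ) (k : Fin K) : Set ((Fin K → ℝ) × (Fin K → ℝ)) :=
  (fun p => (p.1 k, p.2 k)) ⁻¹' sameCell N

lemma measurableSet_sharedCell {K : ℕ} (N : ℕ) (k : Fin K) : MeasurableSet (sharedCell N k) :=
  (measurableSet_sameCell N).preimage (by fun_prop)

lemma swap_preimage_sharedCell {K : ℕ} (N : ℕ) (k : Fin K) :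
    Prod.swap ⁻¹' sharedCell N k = sharedCell N k :=
  Set.ext fun _ => eq_comm

/-- The pairs of points of `ℝ^K` that lie in different cells in every coordinate. -/
def separated (K N : ℕ) : Set ((Fin K → ℝ) × (Fin K → ℝ)) := ⋂ k, (sharedCell N k)ᶜ

lemma measurableSet_separated (K N : ℕ) : MeasurableSet (separated K N) :=
  .iInter fun k => (measurableSet_sharedCell N k).compl

lemma measurePreserving_cellPoint_pair {N : ℕ} {i j : Fin N} (hij : i ≠ j) :
    MeasurePreserving (fun ω : Equiv.Perm (Fin N) × (Fin N → ℝ) =>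
        (cellPoint N (ω.1 i, ω.2 i), cellPoint N (ω.1 j, ω.2 j)))
      ((uniformOn univ).prod (Measure.pi fun _ => unif))
      ((unif.prod unif)[|(sameCell N)ᶜ]) := by
  have : NeZero N := ⟨i.pos.ne'⟩
  have hpair := (measurePreserving_perm_apply_prodMk_apply hij).prod
    (measurePreserving_eval_prodMk_eval (ν := unif) hij)
  rw [cond_prod_eq] at hpair
  have hpoint := measurePreserving_cellPoint (N := N)
  have hcell := (hpoint.prod hpoint).comp
    (measurePreserving_prodProdProdComm (uniformOn univ) (uniformOn univ) unif unif)
  have hIco : ∀ᵐ p ∂((uniformOn (univ : Set (Fin N))).prod (uniformOn (univ : Set (Fin N)))).prod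
      (unif.prod unif), p.2.1 ∈ Ico (0 : ℝ) 1 ∧ p.2.2 ∈ Ico (0 : ℝ) 1 :=
    (Measure.quasiMeasurePreserving_snd.ae
      ((Measure.quasiMeasurePreserving_fst.ae ae_mem_Ico_unif).and
        (Measure.quasiMeasurePreserving_snd.ae ae_mem_Ico_unif)))
  refine ((measurePreserving_cond hcell (measurableSet_sameCell N).compl ?_).comp hpair :)
  filter_upwards [hIco] with p hp
  refine propext ?_
  change (_ ∧ _) ↔ ¬ ⌈_⌉ = ⌈_⌉
  simp only [Function.comp_apply, Prod.map_fst, Prod.map_snd, ceil_mul_cellPoint _ hp.1,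
    ceil_mul_cellPoint _ hp.2, mem_offDiag, mem_univ, true_and, and_true, add_left_inj,
    Nat.cast_inj, Fin.val_inj, ne_eq]

lemma lhsMeasure_eq (K N : ℕ) : lhsMeasure K N =
    (Measure.pi fun _ => uniformOn univ).prod (Measure.pi fun _ => Measure.pi fun _ => unif) := by
  rw [lhsMeasure, toMeasure_uniformOfFintype]
  rfl

lemma measurePreserving_lhsZ {K N : ℕ} (j : Fin N) :
    MeasurePreserving (fun ω => lhsZ K N ω j) (lhsMeasure K N) (cube K) := by
  have : NeZero N := ⟨j.pos.ne'⟩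
  have hcoord := measurePreserving_pi _ _ fun _ : Fin K => measurePreserving_cellPoint.comp
    ((measurePreserving_perm_apply j).prod (measurePreserving_eval (fun _ => unif) j))
  rw [lhsMeasure_eq]
  exact (hcoord.comp (measurePreserving_arrowProdEquivProdArrow _ _ _ _ _).symm :)

lemma measurePreserving_lhsZ_prodMk_lhsZ {K N : ℕ} {i j : Fin N} (hij : i ≠ j) :
    MeasurePreserving (fun ω => (lhsZ K N ω i, lhsZ K N ω j)) (lhsMeasure K N)
      (((cube K).prod (cube K))[|separated K N]) := by
  have hcoord := measurePreserving_pi _ _ fun _ : Fin K => measurePreserving_cellPoint_pair hij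
  rw [pi_cond_eq fun _ => (measurableSet_sameCell N).compl] at hcoord
  have hsep := measurePreserving_cond
    (measurePreserving_arrowProdEquivProdArrow ℝ ℝ (Fin K) (fun _ => unif) fun _ => unif)
    (measurableSet_separated K N)
    (t := univ.pi fun _ => (sameCell N)ᶜ)
    (.of_eq (Set.ext fun v => by rw [mem_univ_pi, mem_preimage, separated, mem_iInter]; rfl))
  rw [lhsMeasure_eq]
  exact ((hsep.comp hcoord).comp (measurePreserving_arrowProdEquivProdArrow _ _ _ _ _).symm :)

/-! ### First-order expansion of the separation event -/

section Bonferroni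

variable {ι Y : Type*} [Fintype ι] (E : ι → Set Y)

-- If `y` lies in exactly `m` of the events, this says `|[m = 0] - (1 - m)| ≤ m (m - 1)`.
lemma abs_indicator_iInter_compl_sub_le (y : Y) :
    |(⋂ i, (E i)ᶜ).indicator 1 y - (1 - ∑ i, (E i).indicator 1 y)|
      ≤ ∑ q ∈ Finset.univ.offDiag, (E q.1 ∩ E q.2).indicator (1 : Y → ℝ) y := by
  classical
  set A : Finset ι := {i | y ∈ E i} with hA
  have hsum : ∑ i, (E i).indicator (1 : Y → ℝ) y = A.card := by
    simp only [indicator_apply, Pi.one_apply, Finset.sum_boole, hA]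
  have hpairs : ∑ q ∈ Finset.univ.offDiag, (E q.1 ∩ E q.2).indicator (1 : Y → ℝ) y
      = A.card * (A.card - 1) := by
    have hoff : (Finset.univ.offDiag.filter fun q : ι × ι => y ∈ E q.1 ∩ E q.2) = A.offDiag := by
      ext q
      simp only [hA, Finset.mem_filter, Finset.mem_offDiag, Finset.mem_univ, true_and,
        mem_inter_iff]
      tauto
    simp only [indicator_apply, Pi.one_apply, Finset.sum_boole, hoff, Finset.offDiag_card]
    rw [Nat.cast_sub (Nat.le_mul_self _), Nat.cast_mul]
    ring
  have hinter : y ∈ ⋂ i, (E i)ᶜ ↔ A.card = 0 := by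
    simp [hA, Finset.filter_eq_empty_iff]
  rw [hsum, hpairs, indicator_apply, hinter]
  obtain h0 | h1 := Nat.eq_zero_or_pos A.card
  · simp [h0]
  · have h1' : (1 : ℝ) ≤ A.card := Nat.one_le_cast.2 h1
    rw [if_neg h1.ne', zero_sub, neg_sub, abs_of_nonneg (by linarith)]
    exact le_mul_of_one_le_left (by linarith) h1'

variable {E} [MeasurableSpace Y] {ν : Measure Y}

lemma abs_setIntegral_iInter_compl_sub_le (hE : ∀ i, MeasurableSet (E i)) {F : Y → ℝ}
    (hF : Integrable F ν) :
    |∫ y in ⋂ i, (E i)ᶜ, F y ∂ν - (∫ y, F y ∂ν - ∑ i, ∫ y in E i, F y ∂ν)|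
      ≤ ∑ q ∈ Finset.univ.offDiag, ∫ y in E q.1 ∩ E q.2, |F y| ∂ν := by
  have hD : MeasurableSet (⋂ i, (E i)ᶜ) := .iInter fun i => (hE i).compl
  simp only [← integral_indicator (hE _), ← integral_indicator ((hE _).inter (hE _)),
    ← integral_indicator hD]
  have hE1 := integrable_finsetSum Finset.univ fun i _ => hF.indicator (hE i)
  have hE2 := integrable_finsetSum (Finset.univ.offDiag : Finset (ι × ι)) fun q _ =>
    hF.abs.indicator ((hE q.1).inter (hE q.2))
  have hE0 : Integrable (fun y => F y - ∑ i, (E i).indicator F y) ν := hF.sub hE1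
  rw [← integral_finsetSum _ fun i _ => hF.indicator (hE i),
    ← integral_finsetSum _ fun q _ => hF.abs.indicator ((hE q.1).inter (hE q.2)),
    ← integral_sub hF hE1, ← integral_sub (hF.indicator hD) hE0]
  refine abs_integral_le_integral_abs.trans
    (integral_mono ((hF.indicator hD).sub hE0).abs hE2 fun y => ?_)
  have hmul (f : Y → ℝ) (s : Set Y) : s.indicator f y = s.indicator 1 y * f y := by
    by_cases hy : y ∈ s <;> simp [hy]
  simp only [hmul F, hmul fun y => |F y|, ← Finset.sum_mul, ← one_sub_mul, ← sub_mul, abs_mul]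
  exact mul_le_mul_of_nonneg_right (abs_indicator_iInter_compl_sub_le E y) (abs_nonneg _)

end Bonferroni

lemma setIntegral_comp_fst {Y Z : Type*} [MeasurableSpace Y] [MeasurableSpace Z] {ν : Measure Y}
    {ρ : Measure Z} [IsFiniteMeasure ρ] [SFinite ν] {s : Set (Y × Z)} (hs : MeasurableSet s) {c : ℝ}
    (hc : ∀ᵐ y ∂ν, ρ.real (Prod.mk y ⁻¹' s) = c) {f : Y → ℝ} (hf : Integrable f ν) :
    ∫ p in s, f p.1 ∂ν.prod ρ = c * ∫ y, f y ∂ν := by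
  rw [← integral_indicator hs, integral_prod _ ((hf.comp_fst ρ).indicator hs),
    ← integral_const_mul]
  refine integral_congr_ae ?_
  filter_upwards [hc] with y hy
  have hsection : (fun z => s.indicator (fun p => f p.1) (y, z))
      = (Prod.mk y ⁻¹' s).indicator fun _ => f y := rfl
  rw [hsection, integral_indicator_const _ (measurable_prodMk_left hs), hy, smul_eq_mul]

section CellMeasure

variable {K N : ℕ} [NeZero N]

lemma unif_real_preimage_sameCell {s : ℝ} (hs : s ∈ Ioc (0 : ℝ) 1) :
    unif.real (Prod.mk s ⁻¹' sameCell N) = (N : ℝ)⁻¹ := by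
  have hN : (0 : ℝ) < N := Nat.cast_pos.2 (NeZero.pos N)
  have hsection : Prod.mk s ⁻¹' sameCell N
      = Ioc (((⌈N * s⌉ : ℝ) - 1) / N) ((⌈N * s⌉ : ℝ) / N) := by
    ext t
    rw [mem_Ioc, div_lt_iff₀' hN, le_div_iff₀' hN, ← Int.ceil_eq_iff]
    exact eq_comm
  have hsub : Ioc (((⌈N * s⌉ : ℝ) - 1) / N) ((⌈N * s⌉ : ℝ) / N) ⊆ Icc 0 1 := by
    have h1 : (1 : ℝ) ≤ ⌈N * s⌉ := by exact_mod_cast Int.one_le_ceil_iff.2 (mul_pos hN hs.1)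
    have h2 : (⌈N * s⌉ : ℝ) ≤ N := by
      exact_mod_cast Int.ceil_le.2 (by simpa using mul_le_of_le_one_right hN.le hs.2)
    exact Ioc_subset_Icc_self.trans
      (Icc_subset_Icc (div_nonneg (by linarith) hN.le) (div_le_one_of_le₀ h2 hN.le))
  rw [measureReal_def, unif, hsection, Measure.restrict_eq_self _ hsub, Real.volume_Ioc,
    ← sub_div, sub_sub_cancel, ENNReal.toReal_ofReal (by positivity), one_div]

lemma ae_unif_real_sameCell : ∀ᵐ s ∂unif, unif.real (Prod.mk s ⁻¹' sameCell N) = (N : ℝ)⁻¹ :=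
  ae_mem_Ioc_unif.mono fun _ => unif_real_preimage_sameCell

lemma ae_cube_real_sharedCell (k : Fin K) :
    ∀ᵐ x ∂cube K, (cube K).real (Prod.mk x ⁻¹' sharedCell N k) = (N : ℝ)⁻¹ := by
  have heval := measurePreserving_eval (fun _ : Fin K => unif) k
  filter_upwards [heval.quasiMeasurePreserving.ae (ae_unif_real_sameCell (N := N))] with x hx
  rw [← hx]
  exact heval.measureReal_preimage
    (measurable_prodMk_left (measurableSet_sameCell N)).nullMeasurableSet

lemma ae_cube_real_sharedCell_inter {k l : Fin K} (hkl : k ≠ l) :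
    ∀ᵐ x ∂cube K, (cube K).real (Prod.mk x ⁻¹' (sharedCell N k ∩ sharedCell N l))
      = ((N : ℝ)⁻¹) ^ 2 := by
  have heval := fun k => (measurePreserving_eval (fun _ : Fin K => unif) k).quasiMeasurePreserving
  have hpair := measurePreserving_eval_prodMk_eval (ν := unif) hkl
  have hcell := ae_unif_real_sameCell (N := N)
  filter_upwards [(heval k).ae hcell, (heval l).ae hcell] with x hk hl
  rw [sq]
  nth_rw 1 [← hk]
  rw [← hl, ← measureReal_prod_prod]
  have hS := fun s => measurable_prodMk_left (x := s) (measurableSet_sameCell N)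
  exact hpair.measureReal_preimage ((hS _).prod (hS _)).nullMeasurableSet

end CellMeasure

/-! ### Averaging over cells -/

section SymmetricSet

variable {Y : Type*} [MeasurableSpace Y] {ν : Measure Y} [IsFiniteMeasure ν] {s : Set (Y × Y)}

lemma setIntegral_comp_swap (hsymm : Prod.swap ⁻¹' s = s) (F : Y × Y → ℝ) :
    ∫ p in s, F p.swap ∂ν.prod ν = ∫ p in s, F p ∂ν.prod ν := by
  have hswap := Measure.measurePreserving_swap (μ := ν) (ν := ν)
  nth_rw 1 [← hsymm]
  exact hswap.setIntegral_preimage_emb MeasurableEquiv.prodComm.measurableEmbedding F s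

variable (hs : MeasurableSet s) (hsymm : Prod.swap ⁻¹' s = s) {c : ℝ}
  (hc : ∀ᵐ y ∂ν, ν.real (Prod.mk y ⁻¹' s) = c) {f : Y → ℝ}

include hs hsymm hc

lemma setIntegral_comp_snd (hf : Integrable f ν) :
    ∫ p in s, f p.2 ∂ν.prod ν = c * ∫ y, f y ∂ν := by
  rw [← setIntegral_comp_fst hs hc hf]
  exact setIntegral_comp_swap hsymm fun p => f p.1

lemma setIntegral_sq_add_sq (hf : MemLp f 2 ν) :
    ∫ p in s, (f p.1 ^ 2 + f p.2 ^ 2) ∂ν.prod ν = 2 * c * ∫ y, f y ^ 2 ∂ν := by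
  rw [integral_add (hf.integrable_sq.comp_fst ν).integrableOn
    (hf.integrable_sq.comp_snd ν).integrableOn, setIntegral_comp_fst hs hc hf.integrable_sq,
    setIntegral_comp_snd hs hsymm hc hf.integrable_sq]
  ring

lemma setIntegral_abs_mul_le (hf : MemLp f 2 ν) :
    ∫ p in s, |f p.1 * f p.2| ∂ν.prod ν ≤ c * ∫ y, f y ^ 2 ∂ν := by
  have hint : Integrable (fun p => (f p.1 ^ 2 + f p.2 ^ 2) / 2) (ν.prod ν) :=
    ((hf.integrable_sq.comp_fst ν).add (hf.integrable_sq.comp_snd ν)).div_const 2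
  have hmul := (hf.integrable one_le_two).mul_prod (hf.integrable one_le_two)
  calc ∫ p in s, |f p.1 * f p.2| ∂ν.prod ν
      ≤ ∫ p in s, (f p.1 ^ 2 + f p.2 ^ 2) / 2 ∂ν.prod ν := by
        refine setIntegral_mono hmul.abs.integrableOn hint.integrableOn fun p => ?_
        rw [abs_mul, ← sq_abs (f p.1), ← sq_abs (f p.2)]
        linarith [two_mul_le_add_sq |f p.1| |f p.2|]
    _ = c * ∫ y, f y ^ 2 ∂ν := by
        rw [integral_div, setIntegral_sq_add_sq hs hsymm hc hf]
        ring

lemma setIntegral_sub_sq (hf : MemLp f 2 ν) :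
    ∫ p in s, (f p.1 - f p.2) ^ 2 ∂ν.prod ν
      = 2 * c * ∫ y, f y ^ 2 ∂ν - 2 * ∫ p in s, f p.1 * f p.2 ∂ν.prod ν := by
  have hsq : Integrable (fun p : Y × Y => f p.1 ^ 2 + f p.2 ^ 2) (ν.prod ν) :=
    (hf.integrable_sq.comp_fst ν).add (hf.integrable_sq.comp_snd ν)
  have hmul := (hf.integrable one_le_two).mul_prod (hf.integrable one_le_two)
  rw [← setIntegral_sq_add_sq hs hsymm hc hf, ← integral_const_mul,
    ← integral_sub hsq.integrableOn (hmul.const_mul 2).integrableOn]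
  exact integral_congr_ae (.of_forall fun p => by ring)

end SymmetricSet

lemma mul_abs_sub_lt_one_of_mem_sameCell {N : ℕ} {p : ℝ × ℝ} (hp : p ∈ sameCell N) :
    N * |p.1 - p.2| < 1 := by
  have hceil : ⌈N * p.1⌉ = ⌈N * p.2⌉ := hp
  have h1 := Int.ceil_eq_iff.1 hceil
  have h2 := Int.ceil_eq_iff.1 (Eq.refl ⌈N * p.2⌉)
  rw [← Nat.abs_cast, ← abs_mul, mul_sub, abs_sub_lt_iff]
  constructor <;> linarith

lemma exists_uniformContinuous_integral_sq_sub_le {ν : Measure ℝ} [ν.Regular] {f : ℝ → ℝ}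
    (hf : MemLp f 2 ν) {ε : ℝ} (hε : 0 < ε) :
    ∃ φ : ℝ → ℝ, UniformContinuous φ ∧ MemLp φ 2 ν ∧ ∫ t, (f t - φ t) ^ 2 ∂ν ≤ ε := by
  have h2 : ENNReal.ofReal 2 = 2 := by simp
  rw [← h2] at hf ⊢
  obtain ⟨φ, hsupp, hle, hcont, hφ⟩ :=
    hf.exists_hasCompactSupport_integral_rpow_sub_le two_pos hε
  refine ⟨φ, hsupp.uniformContinuous_of_continuous hcont, hφ, ?_⟩
  simpa only [Real.rpow_two, Real.norm_eq_abs, sq_abs] using hle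

lemma mul_setIntegral_sameCell_sub_sq_le {N : ℕ} [NeZero N] {f φ : ℝ → ℝ} {η : ℝ}
    (hf : MemLp f 2 unif) (hφ : MemLp φ 2 unif)
    (hη : ∀ p ∈ sameCell N, (φ p.1 - φ p.2) ^ 2 ≤ η) :
    N * ∫ p in sameCell N, (f p.1 - f p.2) ^ 2 ∂unif.prod unif
      ≤ 2 * η + 8 * ∫ t, (f t - φ t) ^ 2 ∂unif := by
  have hβ : MemLp (fun t => f t - φ t) 2 unif := hf.sub hφ
  have hS := measurableSet_sameCell N
  have hsq : Integrable (fun p : ℝ × ℝ => (f p.1 - φ p.1) ^ 2 + (f p.2 - φ p.2) ^ 2)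
      (unif.prod unif) := (hβ.integrable_sq.comp_fst unif).add (hβ.integrable_sq.comp_snd unif)
  have hint : Integrable (fun p : ℝ × ℝ => (f p.1 - f p.2) ^ 2) (unif.prod unif) :=
    ((hf.comp_fst unif).sub (hf.comp_snd unif)).integrable_sq
  have hle : ∫ p in sameCell N, (f p.1 - f p.2) ^ 2 ∂unif.prod unif
      ≤ ∫ p in sameCell N, (2 * η + 4 * ((f p.1 - φ p.1) ^ 2 + (f p.2 - φ p.2) ^ 2))
          ∂unif.prod unif := by
    refine setIntegral_mono_on hint.integrableOn
      ((integrable_const _).add (hsq.const_mul 4)).integrableOn hS fun p hp => ?_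
    -- `(f s - f t)² ≤ 2 (φ s - φ t)² + 4 ((f s - φ s)² + (f t - φ t)²)`
    nlinarith [hη p hp, sq_nonneg ((f p.1 - φ p.1) + (f p.2 - φ p.2)),
      sq_nonneg ((f p.1 - φ p.1) - (f p.2 - φ p.2) - (φ p.1 - φ p.2))]
  have hmeasure : (unif.prod unif).real (sameCell N) = (N : ℝ)⁻¹ := by
    simpa using setIntegral_comp_fst hS ae_unif_real_sameCell (integrable_const 1)
  rw [integral_add (integrable_const _) (hsq.const_mul 4).integrableOn, integral_const_mul 4,
    setIntegral_sq_add_sq hS (swap_preimage_sameCell N) ae_unif_real_sameCell hβ,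
    setIntegral_const, hmeasure, smul_eq_mul] at hle
  refine (mul_le_mul_of_nonneg_left hle (Nat.cast_nonneg N)).trans_eq ?_
  have hN : (N : ℝ) ≠ 0 := NeZero.ne _
  field_simp
  ring

lemma tendsto_mul_setIntegral_sameCell_sub_sq {f : ℝ → ℝ} (hf : MemLp f 2 unif) :
    Tendsto (fun N : ℕ => N * ∫ p in sameCell N, (f p.1 - f p.2) ^ 2 ∂unif.prod unif)
      atTop (nhds 0) := by
  rw [Metric.tendsto_atTop]
  intro ε hε
  have : unif.Regular := by unfold unif; infer_instance
  obtain ⟨φ, hunif, hφ, hle⟩ :=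
    exists_uniformContinuous_integral_sq_sub_le hf (ε := ε / 16) (by positivity)
  obtain ⟨δ, hδ, hclose⟩ := Metric.uniformContinuous_iff.1 hunif (√(ε / 8)) (by positivity)
  obtain ⟨n, hn⟩ := exists_nat_gt δ⁻¹
  refine ⟨n, fun N hN => ?_⟩
  have hNδ : δ⁻¹ < N := hn.trans_le (Nat.cast_le.2 hN)
  have hN0 : (0 : ℝ) < N := (inv_pos.2 hδ).trans hNδ
  have : NeZero N := ⟨by exact_mod_cast hN0.ne'⟩
  have hη : ∀ p ∈ sameCell N, (φ p.1 - φ p.2) ^ 2 ≤ ε / 8 := fun p hp => by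
    have hdist : dist p.1 p.2 < δ := by
      have h1 := mul_abs_sub_lt_one_of_mem_sameCell hp
      have h2 := (inv_lt_iff_one_lt_mul₀ hδ).1 hNδ
      rw [Real.dist_eq]
      exact lt_of_mul_lt_mul_left (h1.trans h2) hN0.le
    rw [← sq_abs]
    exact (Real.le_sqrt (abs_nonneg _) (by positivity)).1 (hclose hdist).le
  rw [Real.dist_0_eq_abs, abs_of_nonneg]
  · linarith [mul_setIntegral_sameCell_sub_sq_le hf hφ hη]
  · exact mul_nonneg hN0.le (integral_nonneg fun p => sq_nonneg _)

lemma tendsto_mul_setIntegral_sameCell_mul {f : ℝ → ℝ} (hf : MemLp f 2 unif) :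
    Tendsto (fun N : ℕ => N * ∫ p in sameCell N, f p.1 * f p.2 ∂unif.prod unif)
      atTop (nhds (∫ t, f t ^ 2 ∂unif)) := by
  have hlim := ((tendsto_mul_setIntegral_sameCell_sub_sq hf).div_const 2).const_sub
    (∫ t, f t ^ 2 ∂unif)
  rw [zero_div, sub_zero] at hlim
  refine hlim.congr' ?_
  filter_upwards [eventually_ne_atTop 0] with N hN
  have : NeZero N := ⟨hN⟩
  rw [setIntegral_sub_sq (measurableSet_sameCell N) (swap_preimage_sameCell N)
    ae_unif_real_sameCell hf]
  field_simp
  ring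

/-! ### The covariance of two sample points -/

lemma setIntegral_eval_prodMk_eval_preimage {ι : Type*} [Fintype ι] [DecidableEq ι]
    {X : ι → Type*} [∀ i, MeasurableSpace (X i)] {μ : ∀ i, Measure (X i)}
    [∀ i, IsProbabilityMeasure (μ i)] (k : ι) {s : Set (X k × X k)} (hs : MeasurableSet s)
    {f g : (∀ i, X i) → ℝ} (hf : Integrable f (Measure.pi μ)) (hg : Integrable g (Measure.pi μ)) :
    ∫ p in (fun p => (p.1 k, p.2 k)) ⁻¹' s, f p.1 * g p.2 ∂(Measure.pi μ).prod (Measure.pi μ)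
      = ∫ p in s, mainEffect μ f k p.1 * mainEffect μ g k p.2 ∂(μ k).prod (μ k) := by
  have hup := measurePreserving_update (μ := μ) k
  have hup₂ := (hup.prod hup).comp
    (measurePreserving_prodProdProdComm (μ k) (μ k) (Measure.pi μ) (Measure.pi μ))
  have hpre : MeasurableSet ((fun p : (∀ i, X i) × (∀ i, X i) => (p.1 k, p.2 k)) ⁻¹' s) :=
    hs.preimage (by fun_prop)
  have hfg := hf.mul_prod hg
  have hint := hup₂.integrable_comp_of_integrable hfg
  have hset : (Prod.map (fun x : X k × (∀ i, X i) => Function.update x.2 k x.1)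
      (fun x : X k × (∀ i, X i) => Function.update x.2 k x.1) ∘
        fun p : (X k × X k) × (∀ i, X i) × (∀ i, X i) => ((p.1.1, p.2.1), (p.1.2, p.2.2))) ⁻¹'
      ((fun p => (p.1 k, p.2 k)) ⁻¹' s) = s ×ˢ univ := by
    ext ⟨p, z⟩
    simp
  rw [← integral_comp_of_measurePreserving (hup₂.restrict_preimage hpre) hfg.1.restrict, hset]
  refine (setIntegral_prod _ hint.integrableOn).trans ?_
  rw [Measure.restrict_univ]
  exact integral_congr_ae (.of_forall fun p => integral_prod_mul
    (fun z => f (Function.update z k p.1)) fun w => g (Function.update w k p.2))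

section Covariance

variable {K : ℕ}

lemma tendsto_cube_real_separated :
    Tendsto (fun N => ((cube K).prod (cube K)).real (separated K N)) atTop (nhds 1) := by
  have hlow : Tendsto (fun N : ℕ => 1 - (K : ℝ) / N) atTop (nhds 1) := by
    simpa using (tendsto_const_div_atTop_nhds_zero_nat (K : ℝ)).const_sub 1
  refine tendsto_of_tendsto_of_tendsto_of_le_of_le' hlow tendsto_const_nhds ?_
    (.of_forall fun N => measureReal_le_one)
  filter_upwards [eventually_ne_atTop 0] with N hN
  have : NeZero N := ⟨hN⟩
  have hshared (k : Fin K) : ((cube K).prod (cube K)).real (sharedCell N k) = (N : ℝ)⁻¹ := by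
    simpa using setIntegral_comp_fst (measurableSet_sharedCell N k) (ae_cube_real_sharedCell k)
      (integrable_const 1)
  have hunion : ((cube K).prod (cube K)).real (⋃ k, sharedCell N k) ≤ K / N := by
    refine (measureReal_iUnion_fintype_le _).trans_eq ?_
    simp [hshared, div_eq_mul_inv]
  rw [separated, ← compl_iUnion,
    probReal_compl_eq_one_sub (.iUnion fun k => measurableSet_sharedCell N k)]
  linarith

variable {g : (Fin K → ℝ) → ℝ}

lemma abs_setIntegral_separated_add_le {N : ℕ} [NeZero N] (hg : MemLp g 2 (cube K))
    (hg0 : ∫ z, g z ∂cube K = 0) :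
    |∫ p in separated K N, g p.1 * g p.2 ∂(cube K).prod (cube K)
        + ∑ k, ∫ p in sameCell N, mainEffect (fun _ => unif) g k p.1
          * mainEffect (fun _ => unif) g k p.2 ∂unif.prod unif|
      ≤ (Finset.univ.offDiag : Finset (Fin K × Fin K)).card
        * (((N : ℝ)⁻¹) ^ 2 * ∫ z, g z ^ 2 ∂cube K) := by
  have hint := hg.integrable one_le_two
  have hbonf := abs_setIntegral_iInter_compl_sub_le (E := sharedCell N)
    (fun k => measurableSet_sharedCell N k) (hint.mul_prod hint)
  rw [integral_prod_mul, hg0, zero_mul, zero_sub, sub_neg_eq_add] at hbonf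
  have hlinear (k : Fin K) := setIntegral_eval_prodMk_eval_preimage (μ := fun _ => unif) k
    (measurableSet_sameCell N) hint hint
  simp only [← hlinear]
  refine hbonf.trans ?_
  rw [← nsmul_eq_mul]
  refine Finset.sum_le_card_nsmul _ _ _ fun q hq => ?_
  refine setIntegral_abs_mul_le
    ((measurableSet_sharedCell N q.1).inter (measurableSet_sharedCell N q.2)) ?_
    (ae_cube_real_sharedCell_inter (Finset.mem_offDiag.1 hq).2.2) hg
  rw [preimage_inter, swap_preimage_sharedCell, swap_preimage_sharedCell]

lemma tendsto_mul_setIntegral_separated (hg : MemLp g 2 (cube K)) (hg0 : ∫ z, g z ∂cube K = 0) :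
    Tendsto (fun N : ℕ => N * ∫ p in separated K N, g p.1 * g p.2 ∂(cube K).prod (cube K))
      atTop (nhds (-∑ k, ∫ t, mainEffect (fun _ => unif) g k t ^ 2 ∂unif)) := by
  have hlinear : Tendsto (fun N : ℕ => ∑ k, N * ∫ p in sameCell N,
        mainEffect (fun _ => unif) g k p.1 * mainEffect (fun _ => unif) g k p.2 ∂unif.prod unif)
      atTop (nhds (∑ k, ∫ t, mainEffect (fun _ => unif) g k t ^ 2 ∂unif)) :=
    tendsto_finsetSum _ fun k _ => tendsto_mul_setIntegral_sameCell_mul (memLp_mainEffect k hg)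
  set C := (Finset.univ.offDiag : Finset (Fin K × Fin K)).card * ∫ z, g z ^ 2 ∂cube K with hC
  have herror : Tendsto (fun N : ℕ =>
        N * ∫ p in separated K N, g p.1 * g p.2 ∂(cube K).prod (cube K)
          + ∑ k, N * ∫ p in sameCell N, mainEffect (fun _ => unif) g k p.1
            * mainEffect (fun _ => unif) g k p.2 ∂unif.prod unif) atTop (nhds 0) := by
    refine squeeze_zero_norm' ?_ (tendsto_const_div_atTop_nhds_zero_nat C)
    filter_upwards [eventually_ne_atTop 0] with N hN
    have : NeZero N := ⟨hN⟩
    rw [← Finset.mul_sum, ← mul_add, norm_mul, RCLike.norm_natCast, Real.norm_eq_abs]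
    refine (mul_le_mul_of_nonneg_left (abs_setIntegral_separated_add_le hg hg0)
      (Nat.cast_nonneg N)).trans_eq ?_
    rw [hC]
    field_simp
  simpa using herror.sub hlinear

lemma tendsto_mul_cond_separated (hg : MemLp g 2 (cube K)) (hg0 : ∫ z, g z ∂cube K = 0) :
    Tendsto (fun N : ℕ =>
        N * ∫ p, g p.1 * g p.2 ∂(((cube K).prod (cube K))[|separated K N])) atTop
      (nhds (-∑ k, ∫ t, mainEffect (fun _ => unif) g k t ^ 2 ∂unif)) := by
  have hlim := ((tendsto_cube_real_separated (K := K)).inv₀ one_ne_zero).mul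
    (tendsto_mul_setIntegral_separated hg hg0)
  rw [inv_one, one_mul] at hlim
  refine hlim.congr fun N => ?_
  rw [ProbabilityTheory.cond, integral_smul_measure, ENNReal.toReal_inv, smul_eq_mul,
    measureReal_def]
  ring

end Covariance

/-! ### The variance of the estimator -/

lemma mul_variance_inv_mul_sum {Ω : Type*} [MeasurableSpace Ω] {P : Measure Ω}
    [IsProbabilityMeasure P] {N : ℕ} [NeZero N] {X : Fin N → Ω → ℝ} (hX : ∀ i, MemLp (X i) 2 P)
    {v c : ℝ} (hv : ∀ i, Var[X i; P] = v) (hc : ∀ i j, i ≠ j → cov[X i, X j; P] = c) :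
    N * Var[fun ω => (N : ℝ)⁻¹ * ∑ j, X j ω; P] = v + (N - 1) * c := by
  have hN : (N : ℝ) ≠ 0 := NeZero.ne _
  have hcov (i j : Fin N) : cov[X i, X j; P] = (if i = j then v - c else 0) + c := by
    split_ifs with hij
    · rw [← hij, covariance_self (hX i).1.aemeasurable, hv, sub_add_cancel]
    · rw [hc i j hij, zero_add]
  rw [variance_const_mul, variance_fun_sum hX]
  simp only [hcov, Finset.sum_add_distrib, Finset.sum_ite_eq, Finset.mem_univ, if_true,
    Finset.sum_const, Finset.card_univ, Fintype.card_fin, nsmul_eq_mul]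
  field_simp
  ring

section Estimator

variable {K N : ℕ} {h : (Fin K → ℝ) → ℝ}

instance : IsProbabilityMeasure (lhsMeasure K N) := by
  rw [lhsMeasure_eq]
  infer_instance

lemma covariance_lhsZ (hh : MemLp h 2 (cube K)) {i j : Fin N} (hij : i ≠ j) :
    cov[fun ω => h (lhsZ K N ω i), fun ω => h (lhsZ K N ω j); lhsMeasure K N]
      = ∫ p, (h p.1 - ∫ z, h z ∂cube K) * (h p.2 - ∫ z, h z ∂cube K)
          ∂(((cube K).prod (cube K))[|separated K N]) := by
  have hg : Integrable (fun z => h z - ∫ z, h z ∂cube K) (cube K) :=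
    (hh.integrable one_le_two).sub (integrable_const _)
  rw [← integral_comp_of_measurePreserving (measurePreserving_lhsZ_prodMk_lhsZ hij)
    ((hg.mul_prod hg).1.mono_ac cond_absolutelyContinuous), covariance,
    integral_comp_of_measurePreserving (measurePreserving_lhsZ i) hh.1,
    integral_comp_of_measurePreserving (measurePreserving_lhsZ j) hh.1]

lemma mul_variance_lhs_mean [NeZero N] (hh : MemLp h 2 (cube K)) :
    N * Var[fun ω => (N : ℝ)⁻¹ * ∑ j, h (lhsZ K N ω j); lhsMeasure K N]
      = Var[h; cube K] + (N - 1) * ∫ p, (h p.1 - ∫ z, h z ∂cube K) * (h p.2 - ∫ z, h z ∂cube K)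
          ∂(((cube K).prod (cube K))[|separated K N]) :=
  mul_variance_inv_mul_sum (fun j => hh.comp_measurePreserving (measurePreserving_lhsZ j))
    (fun j => (measurePreserving_lhsZ j).variance_fun_comp hh.1.aemeasurable)
    fun _ _ hij => covariance_lhsZ hh hij

lemma tendsto_mul_variance_lhs_mean (hh : MemLp h 2 (cube K)) :
    Tendsto (fun N : ℕ =>
        N * Var[fun ω => (N : ℝ)⁻¹ * ∑ j, h (lhsZ K N ω j); lhsMeasure K N]) atTop
      (nhds (Var[h; cube K] - ∑ k, ∫ t,
        mainEffect (fun _ => unif) (fun z => h z - ∫ z, h z ∂cube K) k t ^ 2 ∂unif)) := by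
  have hg : MemLp (fun z => h z - ∫ z, h z ∂cube K) 2 (cube K) := hh.sub (memLp_const _)
  have hg0 : ∫ z, (h z - ∫ z, h z ∂cube K) ∂cube K = 0 := by
    simpa only [average_eq_integral] using integral_sub_average (cube K) h
  have hcov := tendsto_mul_cond_separated hg hg0
  have hfactor : Tendsto (fun N : ℕ => 1 - (N : ℝ)⁻¹) atTop (nhds 1) := by
    simpa using tendsto_inv_atTop_nhds_zero_nat.const_sub (1 : ℝ)
  have hlim := (hfactor.mul hcov).const_add Var[h; cube K]
  rw [one_mul, ← sub_eq_add_neg] at hlim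
  refine hlim.congr' ?_
  filter_upwards [eventually_ne_atTop 0] with N hN
  have : NeZero N := ⟨hN⟩
  rw [mul_variance_lhs_mean hh]
  field_simp

end Estimator

theorem stmt_16_general (K : ℕ) (h : (Fin K → ℝ) → ℝ) (hL2 : MemLp h 2 (cube K))
    (τ : ℝ) (hτ : τ = ∫ z, h z ∂(cube K))
    (α : Fin K → ℝ → ℝ)
    (hα : ∀ k t, α k t = ∫ z, (h (Function.update z k t) - τ) ∂(cube K))
    (r : (Fin K → ℝ) → ℝ)
    (hr : ∀ z, r z = h z - τ - ∑ k, α k (z k)) :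
    Tendsto (fun N : ℕ => (N : ℝ) * variance
        (fun ω : LHSOmega K N => (N : ℝ)⁻¹ * ∑ j : Fin N, h (fun k => lhsZ K N ω j k))
        (lhsMeasure K N))
      atTop (nhds (∫ z, (r z)^2 ∂(cube K))) ∧
    (∫ z, (h z - τ)^2 ∂(cube K)
      = (∫ z, (r z)^2 ∂(cube K)) + ∑ k, ∫ t, (α k t)^2 ∂unif) ∧
    ((∃ k, 0 < ∫ t, (α k t)^2 ∂unif) →
      ∫ z, (r z)^2 ∂(cube K) < ∫ z, (h z - τ)^2 ∂(cube K)) := by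
  have hg : MemLp (fun z => h z - τ) 2 (cube K) := hL2.sub (memLp_const τ)
  have hg0 : ∫ z, (h z - τ) ∂cube K = 0 := by
    simpa only [average_eq_integral, ← hτ] using integral_sub_average (cube K) h
  obtain rfl : α = mainEffect (fun _ => unif) fun z => h z - τ := funext fun k => funext (hα k)
  have hvar : Var[h; cube K] = ∫ z, (h z - τ) ^ 2 ∂cube K := by
    rw [variance_eq_integral hL2.1.aemeasurable, hτ]
  have hres : ∫ z, (r z) ^ 2 ∂cube K = ∫ z, (h z - τ) ^ 2 ∂cube K
      - ∑ k, ∫ t, (mainEffect (fun _ => unif) (fun z => h z - τ) k t) ^ 2 ∂unif := by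
    simp only [hr]
    exact integral_sq_sub_sum_mainEffect hg hg0
  refine ⟨?_, by rw [hres, sub_add_cancel], ?_⟩
  · rw [hres, ← hvar, hτ]
    exact tendsto_mul_variance_lhs_mean hL2
  · rintro ⟨k, hk⟩
    rw [hres, sub_lt_self_iff]
    exact Finset.sum_pos' (fun l _ => integral_nonneg fun t => sq_nonneg _)
      ⟨k, Finset.mem_univ k, hk⟩

/-- **Asymptotic variance of the Latin hypercube estimator (Stein 1987).** For bounded,
a.e. continuous (Riemann-integrable) `h* : [0,1]^K → ℝ` with mean `τ`, main effects `α_k`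
and residual `r`, the LHS estimator `τ̂ = N⁻¹ Σ_j h*(Z_j)` satisfies
`Var(τ̂) = N⁻¹ ∫ r² + o(1/N)`, i.e. `N · Var(τ̂) → ∫ r²`. Moreover
`N · Var_SRS(τ̂) → ∫ (h*-τ)² = ∫ r² + Σ_k ∫ α_k²`, so asymptotically LHS beats simple
random sampling, strictly unless all main effects vanish. -/
theorem stmt_16 (K : ℕ) (h : (Fin K → ℝ) → ℝ) (hmeas : Measurable h)
    (hbdd : ∃ C, ∀ z, |h z| ≤ C)
    (hcont : ∀ᵐ z ∂(cube K), ContinuousAt h z)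
    (τ : ℝ) (hτ : τ = ∫ z, h z ∂(cube K))
    (α : Fin K → ℝ → ℝ)
    (hα : ∀ k t, α k t = ∫ z, (h (Function.update z k t) - τ) ∂(cube K))
    (r : (Fin K → ℝ) → ℝ)
    (hr : ∀ z, r z = h z - τ - ∑ k, α k (z k)) :
    Tendsto (fun N : ℕ => (N : ℝ) * variance
        (fun ω : LHSOmega K N => (N : ℝ)⁻¹ * ∑ j : Fin N, h (fun k => lhsZ K N ω j k))
        (lhsMeasure K N))
      atTop (nhds (∫ z, (r z)^2 ∂(cube K))) ∧
    (∫ z, (h z - τ)^2 ∂(cube K)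
      = (∫ z, (r z)^2 ∂(cube K)) + ∑ k, ∫ t, (α k t)^2 ∂unif) ∧
    ((∃ k, 0 < ∫ t, (α k t)^2 ∂unif) →
      ∫ z, (r z)^2 ∂(cube K) < ∫ z, (h z - τ)^2 ∂(cube K)) := by
  obtain ⟨C, hC⟩ := hbdd
  exact stmt_16_general K h (.of_bound hmeas.aestronglyMeasurable C (.of_forall hC)) τ hτ α hα r hr
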